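/- Let p, q, r be distinct primes. Then K(C_p ⊕ C_q ⊕ C_r) = 3 − 1/p − 1/q − 1/r + 1/(pqr). -/

import Mathlib

/-- The cross number `k(S)` of a sequence (finite multiset) `S` over an additive group:
the sum, with multiplicity, of the reciprocals of the orders of its elements. -/
noncomputable def crossNum {G : Type*} [AddCommGroup G] (S : Multiset G) : ℝ :=
  (S.map fun g => ((addOrderOf g : ℝ))⁻¹).sum

/-- `S` is zero-sum free: no nonempty sub-multiset of `S` has sum `0`. -/
def IsZeroSumFree {G : Type*} [AddCommGroup G] (S : Multiset G) : Prop :=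
  ∀ T : Multiset G, T ≤ S → T ≠ 0 → T.sum ≠ 0

/-- The little cross number `k(G)`: the maximal cross number of a zero-sum free
sequence over `G`. -/
noncomputable def littleK (G : Type*) [AddCommGroup G] : ℝ :=
  sSup {x : ℝ | ∃ S : Multiset G, IsZeroSumFree S ∧ crossNum S = x}

/-- `S` is a minimal zero-sum sequence: nonempty, sum zero, and no nonempty proper
sub-multiset has sum `0`. -/
def IsMinZeroSum {G : Type*} [AddCommGroup G] (S : Multiset G) : Prop :=
  S ≠ 0 ∧ S.sum = 0 ∧ ∀ T : Multiset G, T ≤ S → T ≠ 0 → T ≠ S → T.sum ≠ 0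

/-- The cross number `K(G)`: the maximal cross number of a minimal zero-sum
sequence over `G`. -/
noncomputable def bigK (G : Type*) [AddCommGroup G] : ℝ :=
  sSup {x : ℝ | ∃ S : Multiset G, IsMinZeroSum S ∧ crossNum S = x}

open Multiset

/-- Davenport constant of `ZMod n` is at most `n` (pulled back along a hom). -/
lemma exists_zero_sub {G : Type*} [AddCommGroup G] {n : ℕ} [NeZero n] (f : G →+ ZMod n)
    (S : Multiset G) (h : n ≤ card S) :
    ∃ T ≤ S, T ≠ 0 ∧ card T ≤ n ∧ f T.sum = 0 := by
  obtain ⟨l, rfl⟩ : ∃ l : List G, S = (l : Multiset G) := ⟨S.toList, by simp⟩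
  simp only [coe_card] at h
  obtain ⟨i, j, hij, he⟩ := Fintype.exists_ne_map_eq_of_card_lt
    (fun i : Fin (n+1) => f (l.take i).sum) (by simp [ZMod.card])
  wlog hlt : i < j generalizing i j
  · exact this j i hij.symm he.symm (lt_of_le_of_ne (not_lt.mp hlt) hij.symm)
  have hj : (j : ℕ) ≤ n := Nat.lt_succ_iff.mp j.2
  have hlt' : (i : ℕ) < j := hlt
  refine ⟨((l.take j).drop i : List G), ?_, ?_, ?_, ?_⟩
  · exact Multiset.coe_le.mpr (((List.drop_sublist _ _).trans (List.take_sublist _ _)).subperm)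
  · intro h0
    have := congrArg card h0
    simp at this
    omega
  · simp; omega
  · have h1 : ((l.take j).take i).sum + ((l.take j).drop i).sum = (l.take j).sum :=
      List.sum_take_add_sum_drop _ _
    rw [List.take_take, min_eq_left hlt'.le] at h1
    have h2 := congrArg f h1
    rw [_root_.map_add] at h2
    simp only [sum_coe]
    have h3 : f (l.take i).sum = f (l.take j).sum := he
    rw [← h3] at h2
    simpa using h2

lemma exists_sub_add {G : Type*} (A B T : Multiset G) (h : T ≤ A + B) :
    ∃ A' ≤ A, ∃ B' ≤ B, T = A' + B' := by
  classical
  refine ⟨T ∩ A, Multiset.inter_le_right, T - A, ?_, ?_⟩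
  · rw [tsub_le_iff_left]; exact h
  · rw [add_comm, Multiset.sub_add_inter]

lemma exists_sub_map {G H : Type*} (f : G → H) (S : Multiset G) :
    ∀ T ≤ S.map f, ∃ S' ≤ S, S'.map f = T := by
  classical
  induction S using Multiset.induction_on with
  | empty => intro T hT; exact ⟨0, le_rfl, by simpa [eq_comm] using hT⟩
  | cons a S ih =>
    intro T hT
    rw [Multiset.map_cons] at hT
    by_cases ha : f a ∈ T
    · obtain ⟨T', rfl⟩ := Multiset.exists_cons_of_mem ha
      obtain ⟨S', h1, h2⟩ := ih T' ((Multiset.cons_le_cons_iff _).mp hT)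
      exact ⟨a ::ₘ S', (Multiset.cons_le_cons_iff _).mpr h1, by simp [h2]⟩
    · obtain ⟨S', h1, h2⟩ := ih T ((Multiset.le_cons_of_notMem ha).mp hT)
      exact ⟨S', h1.trans (Multiset.le_cons_self _ _), h2⟩

lemma crossNum_add {G : Type*} [AddCommGroup G] (S T : Multiset G) :
    crossNum (S + T) = crossNum S + crossNum T := by
  simp [crossNum]

lemma crossNum_cons {G : Type*} [AddCommGroup G] (a : G) (T : Multiset G) :
    crossNum (a ::ₘ T) = (addOrderOf a : ℝ)⁻¹ + crossNum T := by
  simp [crossNum]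

lemma crossNum_le_card {G : Type*} [AddCommGroup G] (S : Multiset G) (w : ℝ)
    (h : ∀ g ∈ S, (addOrderOf g : ℝ)⁻¹ ≤ w) : crossNum S ≤ card S * w := by
  unfold crossNum
  have := Multiset.sum_le_card_nsmul (S.map fun g => ((addOrderOf g : ℝ))⁻¹) w (by simpa using h)
  simpa using this

lemma IsMinZeroSum.eq_of_zero_mem {G : Type*} [AddCommGroup G] {S : Multiset G}
    (hS : IsMinZeroSum S) (h0 : (0 : G) ∈ S) : S = {0} := by
  by_contra hne
  exact hS.2.2 {0} (Multiset.singleton_le.mpr h0) (by simp) (Ne.symm hne) (by simp)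

/-- Amalgamating a proper subsequence into its sum. -/
lemma IsMinZeroSum.amalg {G : Type*} [AddCommGroup G] {R T : Multiset G}
    (hS : IsMinZeroSum (T + R)) (hT : T ≠ 0) : IsMinZeroSum (T.sum ::ₘ R) := by
  classical
  obtain ⟨h1, h2, h3⟩ := hS
  refine ⟨by simp, by simpa using h2, ?_⟩
  intro X hX hX0 hXne
  by_cases hm : T.sum ∈ X
  · obtain ⟨Y, rfl⟩ := Multiset.exists_cons_of_mem hm
    have hY : Y ≤ R := (Multiset.cons_le_cons_iff _).mp hX
    have := h3 (T + Y) (by gcongr) (by simp [hT]) (by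
      intro h; apply hXne; rw [add_left_cancel h])
    simpa using this
  · have hX' : X ≤ R := (Multiset.le_cons_of_notMem hm).mp hX
    refine h3 X (hX'.trans (Multiset.le_add_left _ _)) hX0 ?_
    intro h
    subst h
    have := Multiset.card_le_card hX'
    have h4 := Multiset.card_pos.mpr hT
    simp at this
    exact hT this

lemma reduce_count {G : Type*} [AddCommGroup G] {n : ℕ} [NeZero n] (f : G →+ ZMod n)
    (K : AddSubgroup G) (P : G → Prop) [DecidablePred P] (w : ℝ)
    (hP : ∀ g, P g → f g ≠ 0) (hK : ∀ g, P g → g ∈ K)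
    (hw : ∀ g, P g → (addOrderOf g : ℝ)⁻¹ ≤ w)
    (hx : ∀ x ∈ K, f x = 0 → n * w ≤ (addOrderOf x : ℝ)⁻¹)
    (hw0 : 0 ≤ w)
    (S : Multiset G) (hS : IsMinZeroSum S) (hn : n ≤ card (S.filter P)) :
    ∃ S' : Multiset G, IsMinZeroSum S' ∧ card S' < card S ∧
      crossNum S ≤ crossNum S' := by
  classical
  obtain ⟨T, hTS, hT0, hTn, hTf⟩ := exists_zero_sub f (S.filter P) hn
  have hTP : ∀ g ∈ T, P g := fun g hg => (Multiset.mem_filter.mp (Multiset.mem_of_le hTS hg)).2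
  have hTk : crossNum T ≤ n * w := by
    refine (crossNum_le_card T w fun g hg => hw g (hTP g hg)).trans ?_
    gcongr
  have hTle : T ≤ S := hTS.trans (Multiset.filter_le _ _)
  obtain ⟨R, rfl⟩ := Multiset.le_iff_exists_add.mp hTle
  refine ⟨T.sum ::ₘ R, hS.amalg hT0, ?_, ?_⟩
  · have h1 : card T ≠ 0 := by simpa using hT0
    have h2 : card T ≠ 1 := by
      intro h
      obtain ⟨a, rfl⟩ := Multiset.card_eq_one.mp h
      exact hP a (hTP a (by simp)) (by simpa using hTf)
    simp; omega
  · rw [crossNum_add, crossNum_cons]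
    have := hx T.sum (AddSubgroup.multiset_sum_mem _ _ fun g hg => hK g (hTP g hg)) hTf
    linarith

lemma IsMinZeroSum.map_equiv {G H : Type*} [AddCommGroup G] [AddCommGroup H] (e : G ≃+ H)
    {S : Multiset G} (hS : IsMinZeroSum S) : IsMinZeroSum (S.map e) := by
  obtain ⟨h1, h2, h3⟩ := hS
  refine ⟨by simpa using h1, by rw [← map_multiset_sum, h2, _root_.map_zero], ?_⟩
  intro T hT hT0 hTn
  obtain ⟨S', hS', rfl⟩ := exists_sub_map e S T hT
  rw [← map_multiset_sum]
  have := h3 S' hS' (by rintro rfl; simp at hT0) (by rintro rfl; simp at hTn)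
  simpa using this

lemma crossNum_map_equiv {G H : Type*} [AddCommGroup G] [AddCommGroup H] (e : G ≃+ H)
    (S : Multiset G) : crossNum (S.map e) = crossNum S := by
  simp [crossNum, Multiset.map_map]

lemma addOrderOf_zmod {p : ℕ} (hp : p.Prime) (a : ZMod p) (ha : a ≠ 0) : addOrderOf a = p := by
  have := Fact.mk hp
  exact addOrderOf_eq_prime (by simp) ha

/-- Quotienting out a full `C_p`. -/
lemma quotient_step {H : Type*} [AddCommGroup H] [Finite H] {p : ℕ} (hp : p.Prime)
    (hc : p.Coprime (Nat.card H)) (B : ℝ)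
    (hB : ∀ S : Multiset H, IsMinZeroSum S → crossNum S ≤ B)
    (S : Multiset (ZMod p × H)) (hS : IsMinZeroSum S) (P : ZMod p × H → Prop) [DecidablePred P]
    (hPs : ∀ g, P g → g.2 = 0)
    (hn : p - 1 ≤ card (S.filter P)) :
    crossNum S ≤ 1 ∨ crossNum S ≤ 1 - (p : ℝ)⁻¹ + B - (1 - (p : ℝ)⁻¹) * (Nat.card H : ℝ)⁻¹ := by
  classical
  have := Fact.mk hp
  have hp0 : (0 : ℝ) < p := by exact_mod_cast hp.pos
  by_cases h0 : (0 : ZMod p × H) ∈ S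
  · left; rw [hS.eq_of_zero_mem h0]; simp [crossNum]
  set U := S.filter (fun g => g.2 = 0) with hU
  set V := S.filter (fun g => ¬ g.2 = 0) with hV
  have hUV : U + V = S := Multiset.filter_add_not _ _
  have hnU : p - 1 ≤ card U := hn.trans (Multiset.card_le_card (by
    apply Multiset.monotone_filter_right; exact fun g hg => hPs g hg))
  have hU1 : ∀ g ∈ U, g.1 ≠ 0 ∧ g.2 = 0 := by
    intro g hg
    rw [hU, Multiset.mem_filter] at hg
    refine ⟨fun h => h0 ?_, hg.2⟩
    have : g = 0 := Prod.ext h hg.2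
    exact this ▸ hg.1
  have hUo : ∀ g ∈ U, (addOrderOf g : ℝ)⁻¹ ≤ (p : ℝ)⁻¹ := by
    intro g hg
    rw [Prod.addOrderOf, (hU1 g hg).2, addOrderOf_zmod hp _ (hU1 g hg).1]
    simp
  have hsub : ∀ T ≤ U, T.sum.2 = 0 := by
    intro T hT
    have := map_multiset_sum (AddMonoidHom.snd (ZMod p) H) T
    rw [AddMonoidHom.coe_snd] at this
    rw [this]
    apply Multiset.sum_eq_zero
    intro x hx
    obtain ⟨g, hg, rfl⟩ := Multiset.mem_map.mp hx
    exact (hU1 g (Multiset.mem_of_le hT hg)).2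
  have hUle : U ≤ S := Multiset.filter_le _ _
  have hVle : V ≤ S := Multiset.filter_le _ _
  by_cases hV0 : V = 0
  · left
    have hSU : S = U := by rw [← hUV, hV0, add_zero]
    have hcard : card U ≤ p := by
      by_contra hlt
      push Not at hlt
      obtain ⟨T, hT, hT0, hTn, hTf⟩ := exists_zero_sub (AddMonoidHom.fst (ZMod p) H) U hlt.le
      refine hS.2.2 T (hT.trans hUle) hT0 ?_ (Prod.ext hTf (hsub T hT))
      rintro rfl
      rw [hSU] at hTn
      omega
    rw [hSU]
    refine (crossNum_le_card U _ hUo).trans ?_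
    rw [← div_eq_mul_inv, div_le_one hp0]
    exact_mod_cast hcard
  right
  have hUfree : ∀ T ≤ U, T ≠ 0 → T.sum.1 ≠ 0 := by
    intro T hT hT0 h
    refine hS.2.2 T (hT.trans hUle) hT0 ?_ (Prod.ext h (hsub T hT))
    rintro rfl
    apply hV0
    have h1 := Multiset.card_le_card hT
    have h2 := congrArg card hUV
    rw [Multiset.card_add] at h2
    rw [← Multiset.card_eq_zero]; omega
  have hUcard : card U + 1 ≤ p := by
    by_contra hlt
    obtain ⟨T, hT, hT0, hTn, hTf⟩ := exists_zero_sub (AddMonoidHom.fst (ZMod p) H) U (by omega)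
    exact hUfree T hT hT0 hTf
  have hcover : ∀ a : ZMod p, ∃ T ≤ U, T.sum = (a, 0) := by
    intro a
    obtain ⟨T, hT, hT0, hTn, hTf⟩ := exists_zero_sub (AddMonoidHom.fst (ZMod p) H)
      ((-a, 0) ::ₘ U) (by rw [Multiset.card_cons]; omega)
    by_cases hm : ((-a, 0) : ZMod p × H) ∈ T
    · obtain ⟨Y, rfl⟩ := Multiset.exists_cons_of_mem hm
      have hY : Y ≤ U := (Multiset.cons_le_cons_iff _).mp hT
      refine ⟨Y, hY, Prod.ext ?_ (hsub Y hY)⟩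
      simp at hTf
      simpa using (neg_add_eq_zero.mp hTf).symm
    · exact absurd hTf (hUfree T ((Multiset.le_cons_of_notMem hm).mp hT) hT0)
  have hsnd : ∀ T : Multiset (ZMod p × H), (T.map Prod.snd).sum = T.sum.2 := by
    intro T
    exact (map_multiset_sum (AddMonoidHom.snd (ZMod p) H) T).symm
  have hVsum : V.sum.2 = 0 := by
    have h1 := hS.2.1
    rw [← hUV, Multiset.sum_add] at h1
    have h2 := congrArg Prod.snd h1
    simpa [hsub U le_rfl] using h2
  have hVmin : IsMinZeroSum (V.map Prod.snd) := by
    refine ⟨by simpa using hV0, by rw [hsnd, hVsum], ?_⟩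
    intro T' hT' hT0 hTne hsum
    obtain ⟨T, hT, rfl⟩ := exists_sub_map _ _ _ hT'
    rw [hsnd] at hsum
    obtain ⟨Y, hY, hYs⟩ := hcover (-T.sum.1)
    refine hS.2.2 (Y + T) (by rw [← hUV]; gcongr) ?_ ?_ ?_
    · intro h
      rw [add_eq_zero] at h
      simp [h.2] at hT0
    · intro h
      apply hTne
      have h1 := congrArg card h
      rw [← hUV, Multiset.card_add, Multiset.card_add] at h1
      have h2 := Multiset.card_le_card hY
      have h3 := Multiset.card_le_card hT
      rw [Multiset.eq_of_le_of_card_le hT (by omega)]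
    · rw [Multiset.sum_add, hYs]
      apply Prod.ext <;> simp [hsum]
  have hex : ∃ g ∈ V, g.1 ≠ 0 := by
    by_contra hno
    push Not at hno
    have hz : V.sum = 0 := by
      apply Prod.ext
      · have := map_multiset_sum (AddMonoidHom.fst (ZMod p) H) V
        rw [AddMonoidHom.coe_fst] at this
        rw [this]
        apply Multiset.sum_eq_zero
        intro x hx
        obtain ⟨g, hg, rfl⟩ := Multiset.mem_map.mp hx
        exact hno g hg
      · exact hVsum
    refine hS.2.2 V hVle hV0 ?_ hz
    intro h
    have h1 := congrArg card hUV
    rw [h, Multiset.card_add] at h1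
    have := hp.two_le
    omega
  obtain ⟨g, hgV, hg1⟩ := hex
  obtain ⟨V', hV'⟩ := Multiset.exists_cons_of_mem hgV
  have hBV := hB _ hVmin
  have hle : ∀ W : Multiset (ZMod p × H), crossNum W ≤ crossNum (W.map Prod.snd) := by
    intro W
    unfold crossNum
    rw [Multiset.map_map]
    apply Multiset.sum_map_le_sum_map
    intro x hx
    simp only [Function.comp]
    have hpos : 0 < addOrderOf x.2 := addOrderOf_pos x.2
    have hposx : 0 < addOrderOf x := addOrderOf_pos x
    have hdvd : addOrderOf x.2 ∣ addOrderOf x := addOrderOf_map_dvd (AddMonoidHom.snd (ZMod p) H) x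
    have := Nat.le_of_dvd hposx hdvd
    gcongr
  have hgo : addOrderOf g = p * addOrderOf g.2 := by
    rw [Prod.addOrderOf, addOrderOf_zmod hp _ hg1]
    exact Nat.Coprime.lcm_eq_mul (Nat.Coprime.coprime_dvd_right (addOrderOf_dvd_natCard _) hc)
  have hUk : crossNum U ≤ 1 - (p : ℝ)⁻¹ := by
    refine (crossNum_le_card U _ hUo).trans ?_
    have : (card U : ℝ) + 1 ≤ p := by exact_mod_cast hUcard
    have h2 : (card U : ℝ) ≤ p - 1 := by linarith
    calc (card U : ℝ) * (p : ℝ)⁻¹ ≤ (p - 1) * (p : ℝ)⁻¹ := by gcongr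
      _ = 1 - (p : ℝ)⁻¹ := by field_simp
  have hgcard : (Nat.card H : ℝ)⁻¹ ≤ (addOrderOf g.2 : ℝ)⁻¹ := by
    have hpos : 0 < addOrderOf g.2 := addOrderOf_pos g.2
    have := Nat.le_of_dvd Nat.card_pos (addOrderOf_dvd_natCard g.2)
    gcongr
  rw [← hUV, crossNum_add]
  rw [hV', Multiset.map_cons, crossNum_cons] at hBV
  rw [hV', crossNum_cons, hgo]
  have h5 := hle V'
  push_cast
  rw [mul_inv]
  have hp1 : (p : ℝ)⁻¹ ≤ 1 := inv_le_one_of_one_le₀ (by exact_mod_cast hp.one_le)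
  nlinarith [mul_le_mul_of_nonneg_left hgcard (sub_nonneg.mpr hp1)]

lemma quotient_step' {G H : Type*} [AddCommGroup G] [AddCommGroup H] [Finite H] {p : ℕ}
    (hp : p.Prime) (hc : p.Coprime (Nat.card H)) (B : ℝ)
    (hB : ∀ S : Multiset H, IsMinZeroSum S → crossNum S ≤ B) (e : G ≃+ ZMod p × H)
    (S : Multiset G) (hS : IsMinZeroSum S) (P : G → Prop) [DecidablePred P]
    (hPs : ∀ g, P g → (e g).2 = 0)
    (hn : p - 1 ≤ card (S.filter P)) :
    crossNum S ≤ 1 ∨ crossNum S ≤ 1 - (p : ℝ)⁻¹ + B - (1 - (p : ℝ)⁻¹) * (Nat.card H : ℝ)⁻¹ := by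
  classical
  have h := quotient_step hp hc B hB (S.map e) (hS.map_equiv e) (fun x => P (e.symm x))
    (fun g hg => by simpa using hPs _ hg)
    (by
      rw [Multiset.filter_map, Multiset.card_map]
      simpa [Function.comp_def] using hn)
  rwa [crossNum_map_equiv] at h

lemma addOrderOf_zmod_ite {p : ℕ} (hp : p.Prime) (a : ZMod p) :
    addOrderOf a = if a = 0 then 1 else p := by
  split_ifs with h
  · simp [h]
  · exact addOrderOf_zmod hp a h

lemma ord2 {p q : ℕ} (hp : p.Prime) (hq : q.Prime) (hpq : p ≠ q) (g : ZMod p × ZMod q) :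
    addOrderOf g = (if g.1 = 0 then 1 else p) * (if g.2 = 0 then 1 else q) := by
  rw [Prod.addOrderOf, addOrderOf_zmod_ite hp, addOrderOf_zmod_ite hq]
  have := (Nat.coprime_primes hp hq).mpr hpq
  apply Nat.Coprime.lcm_eq_mul
  split_ifs
  · exact Nat.coprime_one_left _
  · exact Nat.coprime_one_left _
  · exact Nat.coprime_one_right _
  · exact this

lemma ord3 {p q r : ℕ} (hp : p.Prime) (hq : q.Prime) (hr : r.Prime) (hpq : p ≠ q) (hpr : p ≠ r)
    (hqr : q ≠ r) (g : ZMod p × ZMod q × ZMod r) :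
    addOrderOf g = (if g.1 = 0 then 1 else p) *
      ((if g.2.1 = 0 then 1 else q) * (if g.2.2 = 0 then 1 else r)) := by
  rw [Prod.addOrderOf, addOrderOf_zmod_ite hp, ord2 hq hr hqr]
  have h1 := (Nat.coprime_primes hp hq).mpr hpq
  have h2 := (Nat.coprime_primes hp hr).mpr hpr
  apply Nat.Coprime.lcm_eq_mul
  split_ifs <;> first
    | exact Nat.coprime_one_left _
    | exact Nat.Coprime.mul_right (Nat.coprime_one_right _) (Nat.coprime_one_right _)
    | exact Nat.Coprime.mul_right (Nat.coprime_one_right _) h2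
    | exact Nat.Coprime.mul_right h1 (Nat.coprime_one_right _)
    | exact Nat.Coprime.mul_right h1 h2

lemma ub1 {r : ℕ} (hr : r.Prime) (S : Multiset (ZMod r)) (hS : IsMinZeroSum S) :
    crossNum S ≤ 1 := by
  have := Fact.mk hr
  have hr0 : (0 : ℝ) < r := by exact_mod_cast hr.pos
  by_cases h0 : (0 : ZMod r) ∈ S
  · rw [hS.eq_of_zero_mem h0]; simp [crossNum]
  have hc : card S ≤ r := by
    by_contra hlt
    push Not at hlt
    obtain ⟨T, hT, hT0, hTn, hTf⟩ := exists_zero_sub (AddMonoidHom.id (ZMod r)) S hlt.le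
    refine hS.2.2 T hT hT0 ?_ hTf
    rintro rfl
    omega
  refine (crossNum_le_card S (r : ℝ)⁻¹ ?_).trans ?_
  · intro g hg
    rw [addOrderOf_zmod hr g (fun h => h0 (h ▸ hg))]
  · rw [← div_eq_mul_inv, div_le_one hr0]
    exact_mod_cast hc

/-- Support pattern in a product of two groups. -/
def pat2 {A B : Type*} [Zero A] [Zero B] [DecidableEq A] [DecidableEq B] (i j : Bool)
    (g : A × B) : Prop := decide (g.1 ≠ 0) = i ∧ decide (g.2 ≠ 0) = j

/-- Support pattern in a product of three groups. -/
def pat3 {A B C : Type*} [Zero A] [Zero B] [Zero C] [DecidableEq A] [DecidableEq B]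
    [DecidableEq C] (i j k : Bool) (g : A × B × C) : Prop :=
  decide (g.1 ≠ 0) = i ∧ decide (g.2.1 ≠ 0) = j ∧ decide (g.2.2 ≠ 0) = k

instance pat2Dec {A B : Type*} [Zero A] [Zero B] [DecidableEq A] [DecidableEq B] (i j : Bool) :
    DecidablePred (pat2 (A := A) (B := B) i j) := fun _ => by unfold pat2; infer_instance

instance pat3Dec {A B C : Type*} [Zero A] [Zero B] [Zero C] [DecidableEq A] [DecidableEq B]
    [DecidableEq C] (i j k : Bool) :
    DecidablePred (pat3 (A := A) (B := B) (C := C) i j k) :=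
  fun _ => by unfold pat3; infer_instance

lemma card_filter_cons {G : Type*} (P : G → Prop) [DecidablePred P] (a : G) (S : Multiset G) :
    (card ((a ::ₘ S).filter P) : ℝ) = (if P a then 1 else 0) + card (S.filter P) := by
  by_cases h : P a
  · simp [h, add_comm]
  · simp [h]

lemma crossNum_pat2 {p q : ℕ} (hp : p.Prime) (hq : q.Prime) (hpq : p ≠ q)
    (S : Multiset (ZMod p × ZMod q)) (h0 : 0 ∉ S) :
    crossNum S = card (S.filter (pat2 true false)) * (p : ℝ)⁻¹
      + card (S.filter (pat2 false true)) * (q : ℝ)⁻¹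
      + card (S.filter (pat2 true true)) * ((p : ℝ)⁻¹ * (q : ℝ)⁻¹) := by
  induction S using Multiset.induction_on with
  | empty => simp [crossNum]
  | cons a S ih =>
    simp only [Multiset.mem_cons, not_or] at h0
    rw [crossNum_cons, ih h0.2, ord2 hp hq hpq]
    simp only [card_filter_cons]
    have ha : ¬ (a.1 = 0 ∧ a.2 = 0) := fun h => h0.1 (Prod.ext h.1 h.2).symm
    simp only [pat2]
    by_cases h1 : a.1 = 0 <;> by_cases h2 : a.2 = 0 <;>
      simp [h1, h2] <;> first | ring1 | exact absurd ⟨h1, h2⟩ ha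

lemma crossNum_pat3 {p q r : ℕ} (hp : p.Prime) (hq : q.Prime) (hr : r.Prime) (hpq : p ≠ q)
    (hpr : p ≠ r) (hqr : q ≠ r)
    (S : Multiset (ZMod p × ZMod q × ZMod r)) (h0 : 0 ∉ S) :
    crossNum S = card (S.filter (pat3 true false false)) * (p : ℝ)⁻¹
      + card (S.filter (pat3 false true false)) * (q : ℝ)⁻¹
      + card (S.filter (pat3 false false true)) * (r : ℝ)⁻¹
      + card (S.filter (pat3 true true false)) * ((p : ℝ)⁻¹ * (q : ℝ)⁻¹)
      + card (S.filter (pat3 true false true)) * ((p : ℝ)⁻¹ * (r : ℝ)⁻¹)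
      + card (S.filter (pat3 false true true)) * ((q : ℝ)⁻¹ * (r : ℝ)⁻¹)
      + card (S.filter (pat3 true true true)) * ((p : ℝ)⁻¹ * (q : ℝ)⁻¹ * (r : ℝ)⁻¹) := by
  induction S using Multiset.induction_on with
  | empty => simp [crossNum]
  | cons a S ih =>
    simp only [Multiset.mem_cons, not_or] at h0
    rw [crossNum_cons, ih h0.2, ord3 hp hq hr hpq hpr hqr]
    simp only [card_filter_cons]
    have ha : ¬ (a.1 = 0 ∧ a.2.1 = 0 ∧ a.2.2 = 0) :=
      fun h => h0.1 (Prod.ext h.1 (Prod.ext h.2.1 h.2.2)).symm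
    simp only [pat3]
    by_cases h1 : a.1 = 0 <;> by_cases h2 : a.2.1 = 0 <;> by_cases h3 : a.2.2 = 0 <;>
      simp [h1, h2, h3] <;>
      first | ring1 | exact absurd ⟨h1, h2, h3⟩ ha

lemma ub2 {p q : ℕ} (hp : p.Prime) (hq : q.Prime) (hpq : p < q) :
    ∀ S : Multiset (ZMod p × ZMod q), IsMinZeroSum S →
      crossNum S ≤ 2 - (p : ℝ)⁻¹ - (q : ℝ)⁻¹ + (p : ℝ)⁻¹ * (q : ℝ)⁻¹ := by
  have := Fact.mk hp
  have := Fact.mk hq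
  have hp2 : (2 : ℝ) ≤ p := by exact_mod_cast hp.two_le
  have hq2 : (2 : ℝ) ≤ q := by exact_mod_cast hq.two_le
  have hx2 : (p : ℝ)⁻¹ ≤ 1/2 := by rw [inv_le_comm₀ (by linarith) (by norm_num)]; linarith
  have hy2 : (q : ℝ)⁻¹ ≤ 1/2 := by rw [inv_le_comm₀ (by linarith) (by norm_num)]; linarith
  have hx0 : 0 < (p : ℝ)⁻¹ := by positivity
  have hy0 : 0 < (q : ℝ)⁻¹ := by positivity
  have hpx : (p : ℝ) * (p : ℝ)⁻¹ = 1 := mul_inv_cancel₀ (by positivity)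
  have hqy : (q : ℝ) * (q : ℝ)⁻¹ = 1 := mul_inv_cancel₀ (by positivity)
  have hcop := (Nat.coprime_primes hp hq).mpr hpq.ne
  intro S
  induction hn : card S using Nat.strong_induction_on generalizing S with
  | _ n ih =>
  subst hn
  intro hS
  by_cases h0 : (0 : ZMod p × ZMod q) ∈ S
  · rw [hS.eq_of_zero_mem h0]; simp [crossNum]; nlinarith [mul_pos hx0 hy0]
  by_contra hcon
  have hred : ¬ ∃ S' : Multiset (ZMod p × ZMod q), IsMinZeroSum S' ∧ card S' < card S ∧
      crossNum S ≤ crossNum S' := by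
    rintro ⟨S', h1, h2, h3⟩
    exact hcon (h3.trans (ih _ h2 S' rfl h1))
  have c11 : card (S.filter (pat2 true true)) < p := by
    by_contra hge
    refine hred (reduce_count (AddMonoidHom.fst _ _) ⊤ (pat2 true true) ((p : ℝ)⁻¹ * (q : ℝ)⁻¹)
      ?_ ?_ ?_ ?_ ?_ S hS (not_lt.mp hge))
    · intro g hg; simpa using hg.1
    · simp
    · rintro g ⟨h1, h2⟩
      rw [ord2 hp hq hpq.ne]
      simp at h1 h2
      simp [h1, h2, mul_comm]
    · intro x _ hx
      rw [ord2 hp hq hpq.ne, ← mul_assoc, hpx, one_mul]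
      simp at hx
      by_cases h2 : x.2 = 0 <;> simp [hx, h2]
      linarith
    · positivity
  have c10 : card (S.filter (pat2 true false)) < p - 1 := by
    by_contra hge
    have := quotient_step' hp (by simpa using hcop) 1 (ub1 hq) (AddEquiv.refl _) S hS
      (pat2 true false) (by rintro g ⟨h1, h2⟩; simpa using h2) (not_lt.mp hge)
    rw [Nat.card_zmod] at this
    apply hcon
    rcases this with h | h <;> nlinarith [mul_pos hx0 hy0]
  have c01 : card (S.filter (pat2 false true)) < q - 1 := by
    by_contra hge
    have := quotient_step' hq (by simpa using hcop.symm) 1 (ub1 hp) (AddEquiv.prodComm) S hS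
      (pat2 false true) (by rintro g ⟨h1, h2⟩; simpa using h1) (not_lt.mp hge)
    rw [Nat.card_zmod] at this
    apply hcon
    rcases this with h | h <;> nlinarith [mul_pos hx0 hy0]
  apply hcon
  rw [crossNum_pat2 hp hq hpq.ne S h0]
  have d11 : (card (S.filter (pat2 true true)) : ℝ) ≤ p - 1 := by
    rw [le_sub_iff_add_le]; exact_mod_cast c11
  have d10 : (card (S.filter (pat2 true false)) : ℝ) ≤ p - 2 := by
    rw [le_sub_iff_add_le]; exact_mod_cast (by omega)
  have d01 : (card (S.filter (pat2 false true)) : ℝ) ≤ q - 2 := by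
    rw [le_sub_iff_add_le]; exact_mod_cast (by omega)
  have e1 := mul_le_mul_of_nonneg_right d11 (mul_pos hx0 hy0).le
  have e2 := mul_le_mul_of_nonneg_right d10 hx0.le
  have e3 := mul_le_mul_of_nonneg_right d01 hy0.le
  have i1 : ((p : ℝ) - 1) * ((p : ℝ)⁻¹ * (q : ℝ)⁻¹) = (q : ℝ)⁻¹ - (p : ℝ)⁻¹ * (q : ℝ)⁻¹ := by
    linear_combination (q : ℝ)⁻¹ * hpx
  have := mul_pos hx0 hy0
  linarith

/-- Swap the first two coordinates. -/
def swap12 (A B C : Type*) [AddCommGroup A] [AddCommGroup B] [AddCommGroup C] :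
    A × B × C ≃+ B × A × C where
  toFun g := (g.2.1, g.1, g.2.2)
  invFun g := (g.2.1, g.1, g.2.2)
  left_inv _ := rfl
  right_inv _ := rfl
  map_add' _ _ := rfl

/-- Swap the last two coordinates. -/
def swap23 (A B C : Type*) [AddCommGroup A] [AddCommGroup B] [AddCommGroup C] :
    A × B × C ≃+ A × C × B where
  toFun g := (g.1, g.2.2, g.2.1)
  invFun g := (g.1, g.2.2, g.2.1)
  left_inv _ := rfl
  right_inv _ := rfl
  map_add' _ _ := rfl

/-- Move the last coordinate to the front. -/
def rot (A B C : Type*) [AddCommGroup A] [AddCommGroup B] [AddCommGroup C] :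
    A × B × C ≃+ C × A × B where
  toFun g := (g.2.2, g.1, g.2.1)
  invFun g := (g.2.1, g.2.2, g.1)
  left_inv _ := rfl
  right_inv _ := rfl
  map_add' _ _ := rfl

lemma ub3 {p q r : ℕ} (hp : p.Prime) (hq : q.Prime) (hr : r.Prime) (hpq : p < q) (hqr : q < r) :
    ∀ S : Multiset (ZMod p × ZMod q × ZMod r), IsMinZeroSum S →
      crossNum S ≤ 3 - (p : ℝ)⁻¹ - (q : ℝ)⁻¹ - (r : ℝ)⁻¹ + (p : ℝ)⁻¹ * (q : ℝ)⁻¹ * (r : ℝ)⁻¹ := by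
  have := Fact.mk hp
  have := Fact.mk hq
  have := Fact.mk hr
  have hpr : p < r := hpq.trans hqr
  have hp2 : (2 : ℝ) ≤ p := by exact_mod_cast hp.two_le
  have hq2 : (2 : ℝ) ≤ q := by exact_mod_cast hq.two_le
  have hr2 : (2 : ℝ) ≤ r := by exact_mod_cast hr.two_le
  have hx2 : (p : ℝ)⁻¹ ≤ 1/2 := by rw [inv_le_comm₀ (by linarith) (by norm_num)]; linarith
  have hy2 : (q : ℝ)⁻¹ ≤ 1/2 := by rw [inv_le_comm₀ (by linarith) (by norm_num)]; linarith
  have hz2 : (r : ℝ)⁻¹ ≤ 1/2 := by rw [inv_le_comm₀ (by linarith) (by norm_num)]; linarith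
  have hx0 : 0 < (p : ℝ)⁻¹ := by positivity
  have hy0 : 0 < (q : ℝ)⁻¹ := by positivity
  have hz0 : 0 < (r : ℝ)⁻¹ := by positivity
  have hxy := mul_pos hx0 hy0
  have hxz := mul_pos hx0 hz0
  have hyz := mul_pos hy0 hz0
  have hxyz := mul_pos hxy hz0
  have hpx : (p : ℝ) * (p : ℝ)⁻¹ = 1 := mul_inv_cancel₀ (by positivity)
  have hqy : (q : ℝ) * (q : ℝ)⁻¹ = 1 := mul_inv_cancel₀ (by positivity)
  have hrz : (r : ℝ) * (r : ℝ)⁻¹ = 1 := mul_inv_cancel₀ (by positivity)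
  have hzx : (r : ℝ)⁻¹ ≤ (p : ℝ)⁻¹ := by
    have : (p : ℝ) ≤ r := by exact_mod_cast hpr.le
    gcongr
  have cpq := (Nat.coprime_primes hp hq).mpr hpq.ne
  have cpr := (Nat.coprime_primes hp hr).mpr hpr.ne
  have cqr := (Nat.coprime_primes hq hr).mpr hqr.ne
  have ho := ord3 hp hq hr hpq.ne hpr.ne hqr.ne
  intro S
  induction hn : card S using Nat.strong_induction_on generalizing S with
  | _ n ih =>
  subst hn
  intro hS
  by_cases h0 : (0 : ZMod p × ZMod q × ZMod r) ∈ S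
  · rw [hS.eq_of_zero_mem h0]; simp [crossNum]; linarith
  by_contra hcon
  have hred : ¬ ∃ S' : Multiset (ZMod p × ZMod q × ZMod r), IsMinZeroSum S' ∧ card S' < card S ∧
      crossNum S ≤ crossNum S' := by
    rintro ⟨S', h1, h2, h3⟩
    exact hcon (h3.trans (ih _ h2 S' rfl h1))
  let f1 : ZMod p × ZMod q × ZMod r →+ ZMod p := AddMonoidHom.fst _ _
  let f2 : ZMod p × ZMod q × ZMod r →+ ZMod q := (AddMonoidHom.fst _ _).comp (AddMonoidHom.snd _ _)
  let f3 : ZMod p × ZMod q × ZMod r →+ ZMod r := (AddMonoidHom.snd _ _).comp (AddMonoidHom.snd _ _)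
  have c110 : card (S.filter (pat3 true true false)) < p := by
    by_contra hge
    refine hred (reduce_count f1 f3.ker (pat3 true true false) ((p : ℝ)⁻¹ * (q : ℝ)⁻¹)
      ?_ ?_ ?_ ?_ hxy.le S hS (not_lt.mp hge))
    · intro g hg; simpa [f1] using hg.1
    · intro g hg; simpa [f3] using hg.2.2
    · rintro g ⟨h1, h2, h3⟩
      rw [ho]
      simp at h1 h2 h3
      simp [h1, h2, h3, mul_comm]
    · intro x hx1 hx
      rw [ho, ← mul_assoc, hpx, one_mul]
      simp [f1] at hx
      simp [f3] at hx1
      by_cases h2 : x.2.1 = 0 <;> simp [hx, hx1, h2]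
      linarith
  have c101 : card (S.filter (pat3 true false true)) < p := by
    by_contra hge
    refine hred (reduce_count f1 f2.ker (pat3 true false true) ((p : ℝ)⁻¹ * (r : ℝ)⁻¹)
      ?_ ?_ ?_ ?_ hxz.le S hS (not_lt.mp hge))
    · intro g hg; simpa [f1] using hg.1
    · intro g hg; simpa [f2] using hg.2.1
    · rintro g ⟨h1, h2, h3⟩
      rw [ho]
      simp at h1 h2 h3
      simp [h1, h2, h3, mul_comm]
    · intro x hx1 hx
      rw [ho, ← mul_assoc, hpx, one_mul]
      simp [f1] at hx
      simp [f2] at hx1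
      by_cases h2 : x.2.2 = 0 <;> simp [hx, hx1, h2]
      linarith
  have c011 : card (S.filter (pat3 false true true)) < q := by
    by_contra hge
    refine hred (reduce_count f2 f1.ker (pat3 false true true) ((q : ℝ)⁻¹ * (r : ℝ)⁻¹)
      ?_ ?_ ?_ ?_ hyz.le S hS (not_lt.mp hge))
    · intro g hg; simpa [f2] using hg.2.1
    · intro g hg; exact AddMonoidHom.mem_ker.mpr (by simpa [f1] using hg.1)
    · rintro g ⟨h1, h2, h3⟩
      rw [ho]
      simp at h1 h2 h3
      simp [h1, h2, h3, mul_comm]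
    · intro x hx1 hx
      rw [ho, ← mul_assoc, hqy, one_mul]
      simp [f2] at hx
      replace hx1 : x.1 = 0 := AddMonoidHom.mem_ker.mp hx1
      by_cases h2 : x.2.2 = 0 <;> simp [hx, hx1, h2]
      linarith
  have c111 : card (S.filter (pat3 true true true)) < p := by
    by_contra hge
    refine hred (reduce_count f1 ⊤ (pat3 true true true) ((p : ℝ)⁻¹ * ((q : ℝ)⁻¹ * (r : ℝ)⁻¹))
      ?_ ?_ ?_ ?_ (by positivity) S hS (not_lt.mp hge))
    · intro g hg; simpa [f1] using hg.1
    · simp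
    · rintro g ⟨h1, h2, h3⟩
      rw [ho]
      simp at h1 h2 h3
      simp [h1, h2, h3, mul_comm]
    · intro x _ hx
      rw [ho, ← mul_assoc, hpx, one_mul]
      simp [f1] at hx
      by_cases h2 : x.2.1 = 0 <;> by_cases h3 : x.2.2 = 0 <;> simp [hx, h2, h3, mul_comm] <;>
        nlinarith
  have c100 : card (S.filter (pat3 true false false)) < p - 1 := by
    by_contra hge
    have := quotient_step' hp (H := ZMod q × ZMod r)
      (by simpa [Nat.card_prod] using Nat.Coprime.mul_right cpq cpr) _ (ub2 hq hr hqr)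
      (AddEquiv.refl _) S hS (pat3 true false false)
      (by rintro g ⟨h1, h2, h3⟩; exact Prod.ext (by simpa using h2) (by simpa using h3))
      (not_lt.mp hge)
    rw [Nat.card_prod, Nat.card_zmod, Nat.card_zmod, Nat.cast_mul, mul_inv] at this
    apply hcon
    rcases this with h | h
    · linarith
    · exact h.trans (le_of_eq (by ring))
  have c010 : card (S.filter (pat3 false true false)) < q - 1 := by
    by_contra hge
    have := quotient_step' hq (H := ZMod p × ZMod r)
      (by simpa [Nat.card_prod] using Nat.Coprime.mul_right cpq.symm cqr) _ (ub2 hp hr hpr)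
      (swap12 _ _ _) S hS (pat3 false true false)
      (by rintro g ⟨h1, h2, h3⟩; exact Prod.ext (by simpa [swap12] using h1) (by simpa [swap12] using h3))
      (not_lt.mp hge)
    rw [Nat.card_prod, Nat.card_zmod, Nat.card_zmod, Nat.cast_mul, mul_inv] at this
    apply hcon
    rcases this with h | h
    · linarith
    · exact h.trans (le_of_eq (by ring))
  have c001 : card (S.filter (pat3 false false true)) < r - 1 := by
    by_contra hge
    have := quotient_step' hr (H := ZMod p × ZMod q)
      (by simpa [Nat.card_prod] using Nat.Coprime.mul_right cpr.symm cqr.symm) _ (ub2 hp hq hpq)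
      (rot _ _ _) S hS (pat3 false false true)
      (by rintro g ⟨h1, h2, h3⟩; exact Prod.ext (by simpa [rot] using h1) (by simpa [rot] using h2))
      (not_lt.mp hge)
    rw [Nat.card_prod, Nat.card_zmod, Nat.card_zmod, Nat.cast_mul, mul_inv] at this
    apply hcon
    rcases this with h | h
    · linarith
    · exact h.trans (le_of_eq (by ring))
  apply hcon
  rw [crossNum_pat3 hp hq hr hpq.ne hpr.ne hqr.ne S h0]
  have d110 : (card (S.filter (pat3 true true false)) : ℝ) ≤ p - 1 := by
    rw [le_sub_iff_add_le]; exact_mod_cast c110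
  have d101 : (card (S.filter (pat3 true false true)) : ℝ) ≤ p - 1 := by
    rw [le_sub_iff_add_le]; exact_mod_cast c101
  have d011 : (card (S.filter (pat3 false true true)) : ℝ) ≤ q - 1 := by
    rw [le_sub_iff_add_le]; exact_mod_cast c011
  have d111 : (card (S.filter (pat3 true true true)) : ℝ) ≤ p - 1 := by
    rw [le_sub_iff_add_le]; exact_mod_cast c111
  have d100 : (card (S.filter (pat3 true false false)) : ℝ) ≤ p - 2 := by
    rw [le_sub_iff_add_le]; exact_mod_cast (by omega)
  have d010 : (card (S.filter (pat3 false true false)) : ℝ) ≤ q - 2 := by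
    rw [le_sub_iff_add_le]; exact_mod_cast (by omega)
  have d001 : (card (S.filter (pat3 false false true)) : ℝ) ≤ r - 2 := by
    rw [le_sub_iff_add_le]; exact_mod_cast (by omega)
  have e1 := mul_le_mul_of_nonneg_right d110 hxy.le
  have e2 := mul_le_mul_of_nonneg_right d101 hxz.le
  have e3 := mul_le_mul_of_nonneg_right d011 hyz.le
  have e4 := mul_le_mul_of_nonneg_right d111 hxyz.le
  have e5 := mul_le_mul_of_nonneg_right d100 hx0.le
  have e6 := mul_le_mul_of_nonneg_right d010 hy0.le
  have e7 := mul_le_mul_of_nonneg_right d001 hz0.le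
  have i1 : ((p : ℝ) - 1) * ((p : ℝ)⁻¹ * (q : ℝ)⁻¹) = (q : ℝ)⁻¹ - (p : ℝ)⁻¹ * (q : ℝ)⁻¹ := by
    linear_combination (q : ℝ)⁻¹ * hpx
  have i2 : ((p : ℝ) - 1) * ((p : ℝ)⁻¹ * (r : ℝ)⁻¹) = (r : ℝ)⁻¹ - (p : ℝ)⁻¹ * (r : ℝ)⁻¹ := by
    linear_combination (r : ℝ)⁻¹ * hpx
  have i3 : ((q : ℝ) - 1) * ((q : ℝ)⁻¹ * (r : ℝ)⁻¹) = (r : ℝ)⁻¹ - (q : ℝ)⁻¹ * (r : ℝ)⁻¹ := by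
    linear_combination (r : ℝ)⁻¹ * hqy
  have i4 : ((p : ℝ) - 1) * ((p : ℝ)⁻¹ * (q : ℝ)⁻¹ * (r : ℝ)⁻¹)
      = (q : ℝ)⁻¹ * (r : ℝ)⁻¹ - (p : ℝ)⁻¹ * (q : ℝ)⁻¹ * (r : ℝ)⁻¹ := by
    linear_combination (q : ℝ)⁻¹ * (r : ℝ)⁻¹ * hpx
  linarith

/-- The upper bound, for an arbitrary order of the primes. -/
def UB (p q r : ℕ) : Prop :=
  ∀ S : Multiset (ZMod p × ZMod q × ZMod r), IsMinZeroSum S →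
      crossNum S ≤ 3 - (p : ℝ)⁻¹ - (q : ℝ)⁻¹ - (r : ℝ)⁻¹ + (p : ℝ)⁻¹ * (q : ℝ)⁻¹ * (r : ℝ)⁻¹

lemma UB.swap12 {p q r : ℕ} (h : UB p q r) : UB q p r := by
  intro S hS
  have := h _ (hS.map_equiv (_root_.swap12 _ _ _))
  rw [crossNum_map_equiv] at this
  linarith

lemma UB.swap23 {p q r : ℕ} (h : UB p q r) : UB p r q := by
  intro S hS
  have := h _ (hS.map_equiv (_root_.swap23 _ _ _))
  rw [crossNum_map_equiv] at this
  linarith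

lemma ub_all {p q r : ℕ} (hp : p.Prime) (hq : q.Prime) (hr : r.Prime) (hpq : p ≠ q)
    (hpr : p ≠ r) (hqr : q ≠ r) : UB p q r := by
  rcases lt_or_gt_of_ne hpq with h1 | h1 <;> rcases lt_or_gt_of_ne hpr with h2 | h2 <;>
    rcases lt_or_gt_of_ne hqr with h3 | h3
  · exact ub3 hp hq hr h1 h3
  · exact UB.swap23 (ub3 hp hr hq h2 h3)
  · omega
  · exact UB.swap23 (UB.swap12 (ub3 hr hp hq h2 h1))
  · exact UB.swap12 (ub3 hq hp hr h1 h2)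
  · omega
  · exact UB.swap12 (UB.swap23 (ub3 hq hr hp h3 h2))
  · exact UB.swap12 (UB.swap23 (UB.swap12 (ub3 hr hq hp h3 h1)))

lemma aux_zero {p i : ℕ} (hi : i ≤ p - 1) (hp : p.Prime) (h : ((i : ℕ) : ZMod p) = 0) : i = 0 := by
  rw [ZMod.natCast_eq_zero_iff] at h
  have := hp.two_le
  exact Nat.eq_zero_of_dvd_of_lt h (by omega)

lemma aux_one {p i : ℕ} (hi : i ≤ p - 1) (_hp : p.Prime) (h : ((i : ℕ) : ZMod p) + 1 = 0) :
    i = p - 1 := by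
  have h' : ((i + 1 : ℕ) : ZMod p) = 0 := by push_cast; exact h
  rw [ZMod.natCast_eq_zero_iff] at h'
  have := Nat.le_of_dvd (by omega) h'
  omega

lemma lower {p q r : ℕ} (hp : p.Prime) (hq : q.Prime) (hr : r.Prime) (hpq : p ≠ q)
    (hpr : p ≠ r) (hqr : q ≠ r) :
    ∃ S : Multiset (ZMod p × ZMod q × ZMod r), IsMinZeroSum S ∧
      crossNum S = 3 - (p : ℝ)⁻¹ - (q : ℝ)⁻¹ - (r : ℝ)⁻¹ + (p : ℝ)⁻¹ * (q : ℝ)⁻¹ * (r : ℝ)⁻¹ := by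
  have := Fact.mk hp
  have := Fact.mk hq
  have := Fact.mk hr
  refine ⟨Multiset.replicate (p - 1) (1, 0, 0) + (Multiset.replicate (q - 1) (0, 1, 0) +
    (Multiset.replicate (r - 1) (0, 0, 1) + Multiset.replicate 1 (1, 1, 1))), ⟨?_, ?_, ?_⟩, ?_⟩
  · simp
  · simp only [Multiset.sum_add, Multiset.sum_replicate]
    have := hp.one_le
    have := hq.one_le
    have := hr.one_le
    refine Prod.ext ?_ (Prod.ext ?_ ?_) <;> simp [*]
  · intro T hT hT0 hTne hsum
    obtain ⟨A, hA, T1, hT1, rfl⟩ := exists_sub_add _ _ _ hT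
    obtain ⟨B, hB, T2, hT2, rfl⟩ := exists_sub_add _ _ _ hT1
    obtain ⟨C, hC, D, hD, rfl⟩ := exists_sub_add _ _ _ hT2
    obtain ⟨i, hi, rfl⟩ := Multiset.le_replicate_iff.mp hA
    obtain ⟨j, hj, rfl⟩ := Multiset.le_replicate_iff.mp hB
    obtain ⟨k, hk, rfl⟩ := Multiset.le_replicate_iff.mp hC
    obtain ⟨l, hl, rfl⟩ := Multiset.le_replicate_iff.mp hD
    simp only [Multiset.sum_add, Multiset.sum_replicate] at hsum
    have s1 := congrArg Prod.fst hsum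
    have s2 := congrArg (fun x => x.2.1) hsum
    have s3 := congrArg (fun x => x.2.2) hsum
    interval_cases l
    · simp at s1 s2 s3
      rw [aux_zero hi hp s1, aux_zero hj hq s2, aux_zero hk hr s3] at hT0
      simp at hT0
    · simp at s1 s2 s3
      apply hTne
      rw [aux_one hi hp s1, aux_one hj hq s2, aux_one hk hr s3]
  · simp only [crossNum_add]
    simp only [crossNum, Multiset.map_replicate, Multiset.sum_replicate,
      ord3 hp hq hr hpq hpr hqr]
    have hp0 : (p : ℝ) ≠ 0 := by exact_mod_cast hp.ne_zero
    have hq0 : (q : ℝ) ≠ 0 := by exact_mod_cast hq.ne_zero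
    have hr0 : (r : ℝ) ≠ 0 := by exact_mod_cast hr.ne_zero
    simp [Nat.cast_sub hp.one_le, Nat.cast_sub hq.one_le, Nat.cast_sub hr.one_le]
    field_simp
    ring

/-- For distinct primes `p, q, r`:
`K(C_p ⊕ C_q ⊕ C_r) = 3 - 1/p - 1/q - 1/r + 1/(pqr)`. -/
theorem bigK_zmod_prod_three_primes
    (p q r : ℕ) (hp : p.Prime) (hq : q.Prime) (hr : r.Prime)
    (hpq : p ≠ q) (hpr : p ≠ r) (hqr : q ≠ r) :
    bigK (ZMod p × ZMod q × ZMod r)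
      = 3 - (p : ℝ)⁻¹ - (q : ℝ)⁻¹ - (r : ℝ)⁻¹ + ((p : ℝ) * q * r)⁻¹ := by
  have hE : ((p : ℝ) * q * r)⁻¹ = (p : ℝ)⁻¹ * (q : ℝ)⁻¹ * (r : ℝ)⁻¹ := by
    rw [mul_inv, mul_inv]
  rw [hE]
  unfold bigK
  apply IsGreatest.csSup_eq
  refine ⟨lower hp hq hr hpq hpr hqr, ?_⟩
  rintro x ⟨S, hS, rfl⟩
  exact ub_all hp hq hr hpq hpr hqr S hS
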